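/- For N qubits, a graph E on the qubit indices, and any qubit index k, the CZ layer conjugation identity CZ_E · X_k · CZ_E = X_k · ∏_{l ∈ N(k)} Z_l holds, where N(k) is the set of neighbors of k in E. -/

import Mathlib

open Matrix NormedSpace

namespace Qubits

noncomputable section

/-- N-qubit basis states. -/
abbrev QState (N : ℕ) := Fin N → Fin 2

/-- Operators on the N-qubit Hilbert space (dimension `2^N`). -/
abbrev QOp (N : ℕ) := Matrix (QState N) (QState N) ℂ

/-- Pauli X. -/
def pX : Matrix (Fin 2) (Fin 2) ℂ := !![0, 1; 1, 0]

/-- Pauli Y. -/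
def pY : Matrix (Fin 2) (Fin 2) ℂ := !![0, -Complex.I; Complex.I, 0]

/-- Pauli Z. -/
def pZ : Matrix (Fin 2) (Fin 2) ℂ := !![1, 0; 0, -1]

/-- The single-qubit operator `M` acting on qubit `k` and as the identity on all other qubits. -/
def onQubit {N : ℕ} (M : Matrix (Fin 2) (Fin 2) ℂ) (k : Fin N) : QOp N :=
  Matrix.of fun x y => if ∀ j, j ≠ k → x j = y j then M (x k) (y k) else 0

/-- The product `∏_{j ∈ S} f j` of matrices over a finite set of qubit indices, taken in
increasing order of the index (the factors we use always commute pairwise). -/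
def prodOver {N : ℕ} (S : Finset (Fin N)) (f : Fin N → QOp N) : QOp N :=
  ((S.sort (· ≤ ·)).map f).prod

/-- The CZ layer of a graph `G` on the qubit indices: the diagonal matrix whose entry at the
basis state `x` is `(-1)^(Σ_{{j,j'} ∈ E} x_j·x_{j'})`. -/
def czLayer {N : ℕ} (G : SimpleGraph (Fin N)) [DecidableRel G.Adj] : QOp N :=
  Matrix.diagonal fun x =>
    (-1 : ℂ) ^ ∑ e ∈ G.edgeFinset,
      Sym2.lift ⟨fun j j' => (x j : ℕ) * (x j' : ℕ), fun _ _ => Nat.mul_comm _ _⟩ e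

end

end Qubits

open Matrix Qubits

theorem onQubit_pZ_eq {N : ℕ} (l : Fin N) :
    onQubit pZ l = Matrix.diagonal fun x : QState N => (-1 : ℂ) ^ (x l : ℕ) := by
  ext x y
  by_cases h : x = y
  · subst h
    have h2 : x l = 0 ∨ x l = 1 := by omega
    rcases h2 with h2 | h2 <;> simp [onQubit, pZ, h2]
  · rw [Matrix.diagonal_apply_ne _ h]
    simp only [onQubit, Matrix.of_apply]
    split_ifs with h1
    · have hl : x l ≠ y l := by
        intro hl
        apply h
        ext j
        by_cases hj : j = l
        · rw [hj, hl]
        · rw [h1 j hj]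
      have h2 : x l = 0 ∨ x l = 1 := by omega
      have h3 : y l = 0 ∨ y l = 1 := by omega
      rcases h2 with h2 | h2 <;> rcases h3 with h3 | h3 <;> simp_all [pZ]
    · rfl

theorem prodOver_diag {N : ℕ} (S : Finset (Fin N)) (d : Fin N → QState N → ℂ) :
    prodOver S (fun l => Matrix.diagonal (d l)) =
      Matrix.diagonal fun x => ∏ l ∈ S, d l x := by
  have key : ∀ L : List (Fin N), (L.map (fun l => Matrix.diagonal (d l))).prod =
      Matrix.diagonal fun x => (L.map (fun l => d l x)).prod := by
    intro L
    induction L with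
    | nil => simp
    | cons a L ih => simp [ih, Matrix.diagonal_mul_diagonal]
  unfold prodOver
  rw [key]
  congr 1
  funext x
  rw [← List.prod_toFinset _ (Finset.sort_nodup _ _), Finset.sort_toFinset]

theorem cz_sign {N : ℕ} (G : SimpleGraph (Fin N)) [DecidableRel G.Adj] (k : Fin N)
    (x y : QState N) (h : ∀ j, j ≠ k → x j = y j) (hk : (x k : ℕ) + (y k : ℕ) = 1) :
    ((-1 : ℂ) ^ ∑ e ∈ G.edgeFinset,
      Sym2.lift ⟨fun j j' => (x j : ℕ) * (x j' : ℕ), fun _ _ => Nat.mul_comm _ _⟩ e) *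
    ((-1 : ℂ) ^ ∑ e ∈ G.edgeFinset,
      Sym2.lift ⟨fun j j' => (y j : ℕ) * (y j' : ℕ), fun _ _ => Nat.mul_comm _ _⟩ e) =
    ∏ l ∈ G.neighborFinset k, (-1 : ℂ) ^ (y l : ℕ) := by
  rw [← pow_add, ← Finset.sum_add_distrib, ← Finset.prod_pow_eq_pow_sum]
  have himg : (G.neighborFinset k).image (fun l => s(k, l)) ⊆ G.edgeFinset := by
    intro e he
    simp only [Finset.mem_image, SimpleGraph.mem_neighborFinset] at he
    obtain ⟨l, hl, rfl⟩ := he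
    simpa using hl
  rw [← Finset.prod_subset himg, Finset.prod_image]
  · apply Finset.prod_congr rfl
    intro l hl
    have hl' : G.Adj k l := by simpa using hl
    simp only [Sym2.lift_mk]
    rw [h l hl'.ne', ← add_mul, hk, one_mul]
  · intro a _ b _ hab
    have hab2 : a = b ∨ k = b ∧ a = k := by simpa using hab
    rcases hab2 with r | ⟨r, s⟩
    · exact r
    · exact s.trans r
  · intro e he hne
    induction e using Sym2.ind with
    | _ a b =>
      have hab : G.Adj a b := by simpa using he
      have ha : a ≠ k := by
        rintro rfl
        exact hne (Finset.mem_image.2 ⟨b, by simpa using hab, rfl⟩)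
      have hb : b ≠ k := by
        rintro rfl
        exact hne (Finset.mem_image.2 ⟨a, by simpa using hab.symm, Sym2.eq_swap⟩)
      simp only [Sym2.lift_mk]
      rw [h a ha, h b hb]
      exact Even.neg_one_pow ⟨_, rfl⟩

/-- For N qubits, a graph E (as a simple graph on qubit indices) and any qubit
index k: CZ_E · X_k · CZ_E = X_k · ∏_{l ∈ N(k)} Z_l. -/
theorem stmt_8 {N : ℕ} (G : SimpleGraph (Fin N)) [DecidableRel G.Adj] (k : Fin N) :
    czLayer G * onQubit pX k * czLayer G =
      onQubit pX k * prodOver (G.neighborFinset k) (fun l => onQubit pZ l) := by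
  simp only [onQubit_pZ_eq]
  rw [prodOver_diag]
  ext x y
  unfold czLayer
  rw [Matrix.mul_diagonal, Matrix.diagonal_mul, Matrix.mul_diagonal]
  by_cases h : ∀ j, j ≠ k → x j = y j
  · by_cases hk : (x k : ℕ) + (y k : ℕ) = 1
    · rw [← cz_sign G k x y h hk]
      ring
    · have h0 : onQubit pX k x y = 0 := by
        have h2 : x k = 0 ∨ x k = 1 := by omega
        have h3 : y k = 0 ∨ y k = 1 := by omega
        simp only [onQubit, Matrix.of_apply, if_pos h]
        rcases h2 with h2 | h2 <;> rcases h3 with h3 | h3 <;> simp_all [pX]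
      rw [h0]; ring
  · have h0 : onQubit pX k x y = 0 := by
      simp only [onQubit, Matrix.of_apply, if_neg h]
    rw [h0]; ring
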